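/- Let X be a vector lattice whose order continuous dual X_n^~ separates the points of X (this holds in particular when X is an order continuous Banach lattice). Then the universal completion X^u is uo-complete, and every uo-Cauchy net in X uo-converges in X^u. -/

import Mathlib

open Filter Set

section Defs

variable {X : Type*} [Lattice X] [AddCommGroup X]
  [CovariantClass X X (· + ·) (· ≤ ·)]

/-- A net `x` *order converges* to `l`: there is a set `A ⊆ X` (playing the role of a net
`a_γ ↓ 0`), downward directed with infimum `0`, such that every `a ∈ A` eventually
dominates `|x α - l|`. -/
def OrderTendsto {Γ : Type*} [Preorder Γ] (x : Γ → X) (l : X) : Prop :=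
  ∃ A : Set X, A.Nonempty ∧ DirectedOn (· ≥ ·) A ∧ IsGLB A 0 ∧
    ∀ a ∈ A, ∃ α₀ : Γ, ∀ α, α₀ ≤ α → |x α - l| ≤ a

/-- A net `x` *uo-converges* to `l` if `|x α - l| ⊓ y` order converges to `0`
for every `y ≥ 0`. -/
def UoTendsto {Γ : Type*} [Preorder Γ] (x : Γ → X) (l : X) : Prop :=
  ∀ y : X, 0 ≤ y → OrderTendsto (fun α => |x α - l| ⊓ y) 0

/-- A net is *order Cauchy* if the doubly indexed net of differences order converges to `0`. -/
def OrderCauchy {Γ : Type*} [Preorder Γ] (x : Γ → X) : Prop :=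
  OrderTendsto (fun p : Γ × Γ => x p.1 - x p.2) 0

/-- A net is *uo-Cauchy* if the doubly indexed net of differences uo-converges to `0`. -/
def UoCauchy {Γ : Type*} [Preorder Γ] (x : Γ → X) : Prop :=
  UoTendsto (fun p : Γ × Γ => x p.1 - x p.2) 0

/-- The Archimedean property for a lattice-ordered group. -/
def VLArchimedean (X : Type*) [Lattice X] [AddCommGroup X] : Prop :=
  ∀ x y : X, 0 ≤ x → (∀ n : ℕ, n • x ≤ y) → x = 0

end Defs

/-- A linear functional is *order continuous* if it sends order null nets to null nets
of reals. -/
def OrdContFunctional {X : Type*} [Lattice X] [AddCommGroup X]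
    [CovariantClass X X (· + ·) (· ≤ ·)] [Module ℝ X] (f : X →ₗ[ℝ] ℝ) : Prop :=
  ∀ (Γ : Type*) [Preorder Γ] [IsDirected Γ (· ≤ ·)] [Nonempty Γ] (x : Γ → X),
    OrderTendsto x 0 → Filter.Tendsto (fun α => f (x α)) Filter.atTop (nhds 0)

/-!
A set `D` in a Dedekind complete, laterally complete lattice-ordered group is bounded above as soon
as, below every `e > 0`, the truncations `d ⊓ n • e` with `d ∈ D` stay away from `n • e` for some
`n`. Indeed, on a suitable band below `n • e` the set `D` is then dominated by the component of
`n • e` in that band, so a maximal disjoint family of such local bounds has a supremum which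
dominates `D` everywhere.

For a uo-Cauchy net `y` the set of eventual lower bounds of `y` satisfies this criterion: some
`a ≱ e` dominates `|y α - y β| ⊓ e` for all large `α`, `β`, and the Archimedean property does
the rest. If `y` is also bounded below, `liminf y` therefore exists, and the Cauchy estimate passes
to it, so that `y` uo-converges to it. The general case follows by splitting `y` into its positive
and negative parts. Finally, an order dense embedding into an Archimedean group preserves uo-null
nets, hence uo-Cauchy nets.
-/

lemma inf_eq_zero_of_le {α : Type*} [Lattice α] [Zero α] {a b c : α} (h : a ⊓ b = 0)
    (hc : 0 ≤ c) (hca : c ≤ a) : c ⊓ b = 0 :=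
  le_antisymm (h ▸ inf_le_inf_right b hca) (le_inf hc (h ▸ inf_le_right))

lemma posPart_pos_of_not_nonpos {G : Type*} [Lattice G] [AddGroup G] {a : G} (h : ¬ a ≤ 0) :
    0 < a⁺ :=
  (posPart_nonneg a).lt_of_ne' (posPart_eq_zero.not.2 h)

section LatticeOrderedGroup

variable {G : Type*} [Lattice G] [AddCommGroup G] [AddLeftMono G]
  {S : Set G} {a b c e s w x y : G}

lemma inf_le_of_isLUB (hs : IsLUB S s) (h : ∀ t ∈ S, t ⊓ x ≤ c) : s ⊓ x ≤ c := by
  have hsub : s ≤ c + (s ⊔ x) - x := hs.2 fun t ht => by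
    rw [le_sub_iff_add_le, ← inf_add_sup t x]
    exact add_le_add (h t ht) (sup_le_sup_right (hs.1 ht) x)
  rw [le_sub_iff_add_le, ← inf_add_sup s x] at hsub
  exact le_of_add_le_add_right hsub

lemma sup_inf_le_of_inf_le (ha : a ⊓ x ≤ c) (hb : b ⊓ x ≤ c) : (a ⊔ b) ⊓ x ≤ c :=
  inf_le_of_isLUB isLUB_pair (by rintro _ (rfl | rfl) <;> assumption)

lemma sub_inf_le_of_isLUB (hs : IsLUB S s) (h : ∀ t ∈ S, (t - y) ⊓ x ≤ c) :
    (s - y) ⊓ x ≤ c :=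
  inf_le_of_isLUB ((OrderIso.subRight y).isLUB_image'.2 hs) (forall_mem_image.2 h)

lemma sub_inf_le_of_isGLB (hs : IsGLB S s) (h : ∀ t ∈ S, (y - t) ⊓ x ≤ c) :
    (y - s) ⊓ x ≤ c :=
  inf_le_of_isLUB ((OrderIso.subLeft y).isGLB_image'.2 hs).dual (forall_mem_image.2 h)

lemma add_inf_le_inf_add_inf (ha : 0 ≤ a) (hb : 0 ≤ b) (hc : 0 ≤ c) :
    (a + b) ⊓ c ≤ a ⊓ c + b ⊓ c := by
  rw [add_inf, inf_add, inf_add]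
  exact le_inf (le_inf inf_le_left (inf_le_right.trans (le_add_of_nonneg_right hb)))
    (le_inf (inf_le_right.trans (le_add_of_nonneg_left ha))
      (inf_le_right.trans (le_add_of_nonneg_left hc)))

lemma add_inf_eq_zero (ha : a ⊓ c = 0) (hb : b ⊓ c = 0) : (a + b) ⊓ c = 0 := by
  have ha₀ : 0 ≤ a := ha ▸ inf_le_left
  have hb₀ : 0 ≤ b := hb ▸ inf_le_left
  have hc₀ : 0 ≤ c := ha ▸ inf_le_right
  refine le_antisymm ?_ (le_inf (add_nonneg ha₀ hb₀) hc₀)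
  simpa only [ha, hb, add_zero] using add_inf_le_inf_add_inf ha₀ hb₀ hc₀

lemma nsmul_inf_eq_zero (h : a ⊓ b = 0) (n : ℕ) : (n • a) ⊓ b = 0 := by
  induction n with
  | zero => simpa only [zero_nsmul, inf_eq_left] using h ▸ inf_le_right
  | succ n ih => simpa only [succ_nsmul] using add_inf_eq_zero ih h

lemma posPart_add_le (a b : G) : (a + b)⁺ ≤ a⁺ + b⁺ :=
  sup_le (add_le_add (le_posPart a) (le_posPart b))
    (add_nonneg (posPart_nonneg a) (posPart_nonneg b))

lemma posPart_sub_inf_posPart_sub_eq_zero (h : x ⊓ y ≤ a) : (x - a)⁺ ⊓ (y - a)⁺ = 0 := by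
  refine le_antisymm (sup_inf_le_of_inf_le ?_ inf_le_left)
    (le_inf (posPart_nonneg _) (posPart_nonneg _))
  rw [inf_comm]
  refine sup_inf_le_of_inf_le ?_ inf_le_left
  rwa [← inf_sub, sub_nonpos, inf_comm]

lemma le_posPart_sub_of_inf_eq_zero (h : a ⊓ b = 0) (hay : a ≤ y) : a ≤ (y - b)⁺ := by
  have hsum : a + b ≤ (y - b)⁺ + b := calc
    a + b = a ⊔ b := by rw [← inf_add_sup, h, zero_add]
    _ ≤ y ⊔ b := sup_le_sup_right hay b
    _ = (y - b)⁺ + b := by rw [sup_eq_add_posPart_sub, add_comm]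
  exact le_of_add_le_add_right hsum

lemma inf_le_add_posPart_sub_nsmul (ha : 0 ≤ a) (hy : 0 ≤ y) (h : x ⊓ w ≤ a) (n : ℕ) :
    x ⊓ y ≤ a + (y - n • (w - a)⁺)⁺ := by
  have hdisj : (x ⊓ y - a)⁺ ⊓ n • (w - a)⁺ = 0 := by
    rw [inf_comm]
    refine nsmul_inf_eq_zero ?_ n
    rw [inf_comm]
    exact posPart_sub_inf_posPart_sub_eq_zero ((inf_le_inf_right w inf_le_left).trans h)
  have hle : (x ⊓ y - a)⁺ ≤ y := sup_le ((sub_le_self _ ha).trans inf_le_right) hy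
  rw [← sub_le_iff_le_add']
  exact (le_posPart _).trans (le_posPart_sub_of_inf_eq_zero hdisj hle)

-- Since `c ≤ e`, adding one more copy of `c` is paid for by removing one copy of `e`; hence the
-- bound on `c` improves to one on `k • c` for every `k`.
lemma eq_zero_of_le_posPart_sub_nsmul (harch : VLArchimedean G) (hc : 0 ≤ c) (hce : c ≤ e)
    (h : ∀ n : ℕ, c ≤ (y - n • e)⁺) : c = 0 := by
  have hmul : ∀ k n : ℕ, k • c ≤ (y - n • e)⁺ := by
    intro k
    induction k with
    | zero => intro n; simpa only [zero_nsmul] using posPart_nonneg _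
    | succ k ih =>
      intro n
      have hfirst : y - (n + 1) • e + c ≤ y - n • e := by
        rw [succ_nsmul, ← sub_sub, sub_add]
        exact sub_le_self _ (sub_nonneg.2 hce)
      calc
        (k + 1) • c = k • c + c := succ_nsmul c k
        _ ≤ (y - (n + 1) • e)⁺ + c := add_le_add_left (ih (n + 1)) c
        _ = (y - (n + 1) • e + c) ⊔ c := by rw [posPart_def, sup_add, zero_add]
        _ ≤ (y - n • e)⁺ := sup_le (hfirst.trans (le_posPart _)) (h n)
  exact harch c y⁺ hc fun k => by simpa only [zero_nsmul, sub_zero] using hmul k 0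

end LatticeOrderedGroup

section UnboundedOrderConvergence

variable {G : Type*} [Lattice G] [AddCommGroup G] [AddLeftMono G] {Γ : Type*} [Preorder Γ]

lemma UoTendsto.of_abs_sub_le {x x' : Γ → G} {l l' : G} (hx : UoTendsto x l)
    (h : ∀ α, |x' α - l'| ≤ |x α - l|) : UoTendsto x' l' := by
  intro e he
  obtain ⟨A, hne, hdir, hglb, hA⟩ := hx e he
  refine ⟨A, hne, hdir, hglb, fun a ha => ?_⟩
  obtain ⟨α₀, hα₀⟩ := hA a ha
  refine ⟨α₀, fun α hα => le_trans ?_ (hα₀ α hα)⟩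
  rw [sub_zero, sub_zero]
  exact abs_le_abs_of_nonneg (le_inf (abs_nonneg _) he) (inf_le_inf_right e (h α))

lemma UoCauchy.posPart {x : Γ → G} (hx : UoCauchy x) : UoCauchy fun α => (x α)⁺ :=
  UoTendsto.of_abs_sub_le hx fun p => by
    simpa only [sub_zero, posPart_def] using abs_sup_sub_sup_le_abs (x p.1) (x p.2) 0

lemma UoCauchy.neg {x : Γ → G} (hx : UoCauchy x) : UoCauchy fun α => -x α :=
  UoTendsto.of_abs_sub_le hx fun p => by
    rw [sub_zero, sub_zero, neg_sub_neg, abs_sub_comm]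

lemma UoCauchy.negPart {x : Γ → G} (hx : UoCauchy x) : UoCauchy fun α => (x α)⁻ := by
  simpa only [posPart_neg] using hx.neg.posPart

variable [IsDirectedOrder Γ] [Nonempty Γ]

lemma orderTendsto_iff {x : Γ → G} {l : G} :
    OrderTendsto x l ↔ {b | ∀ᶠ α in atTop, |x α - l| ≤ b}.Nonempty ∧
      IsGLB {b | ∀ᶠ α in atTop, |x α - l| ≤ b} 0 := by
  constructor
  · rintro ⟨A, hne, -, hglb, hA⟩
    have hsub : A ⊆ {b | ∀ᶠ α in atTop, |x α - l| ≤ b} :=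
      fun a ha => eventually_atTop.2 (hA a ha)
    refine ⟨hne.mono hsub, fun b hb => ?_, fun z hz => hglb.2 fun a ha => hz (hsub ha)⟩
    obtain ⟨α, hα⟩ := Eventually.exists hb
    exact (abs_nonneg _).trans hα
  · rintro ⟨hne, hglb⟩
    exact ⟨_, hne, fun b hb c hc => ⟨b ⊓ c, hb.mp (hc.mono fun _ hc hb => le_inf hb hc),
      inf_le_left, inf_le_right⟩, hglb, fun _ hb => eventually_atTop.1 hb⟩

lemma uoTendsto_iff {x : Γ → G} {l : G} :
    UoTendsto x l ↔ ∀ e, 0 ≤ e → ∀ z, (∀ b, (∀ᶠ α in atTop, |x α - l| ⊓ e ≤ b) → z ≤ b) →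
      z ≤ 0 := by
  refine forall₂_congr fun e he => ?_
  have habs : ∀ α, |(|x α - l| ⊓ e) - 0| = |x α - l| ⊓ e := fun α => by
    rw [sub_zero, abs_of_nonneg (le_inf (abs_nonneg _) he)]
  simp only [orderTendsto_iff, habs]
  refine ⟨fun h z hz => h.2.2 hz, fun h => ⟨⟨e, .of_forall fun _ => inf_le_right⟩, ?_, h⟩⟩
  intro b hb
  obtain ⟨α, hα⟩ := Eventually.exists hb
  exact (le_inf (abs_nonneg _) he).trans hα

lemma UoTendsto.sub {x y : Γ → G} {p q : G} (hx : UoTendsto x p) (hy : UoTendsto y q) :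
    UoTendsto (fun α => x α - y α) (p - q) := by
  rw [uoTendsto_iff] at hx hy ⊢
  intro e he z hz
  refine hx e he z fun a ha => sub_nonpos.1 (hy e he (z - a) fun b hb => ?_)
  rw [sub_le_iff_le_add']
  refine hz (a + b) ?_
  filter_upwards [ha, hb] with α hα hβ
  have htri : |x α - y α - (p - q)| ≤ |x α - p| + |y α - q| := by
    rw [sub_sub_sub_comm, sub_eq_add_neg, ← abs_neg (y α - q)]
    exact abs_add_le _ _
  calc
    |x α - y α - (p - q)| ⊓ e ≤ (|x α - p| + |y α - q|) ⊓ e := inf_le_inf_right e htri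
    _ ≤ |x α - p| ⊓ e + |y α - q| ⊓ e :=
      add_inf_le_inf_add_inf (abs_nonneg _) (abs_nonneg _) he
    _ ≤ a + b := add_le_add hα hβ

instance isDirectedOrder_prod {α β : Type*} [LE α] [LE β] [IsDirectedOrder α]
    [IsDirectedOrder β] : IsDirectedOrder (α × β) where
  directed a b := by
    obtain ⟨c, hac, hbc⟩ := directed_of (· ≤ ·) a.1 b.1
    obtain ⟨d, had, hbd⟩ := directed_of (· ≤ ·) a.2 b.2
    exact ⟨(c, d), ⟨hac, had⟩, ⟨hbc, hbd⟩⟩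

lemma uoCauchy_iff {x : Γ → G} :
    UoCauchy x ↔ ∀ e, 0 ≤ e → ∀ z,
      (∀ b, (∃ α₀, ∀ α ≥ α₀, ∀ β ≥ α₀, |x α - x β| ⊓ e ≤ b) → z ≤ b) → z ≤ 0 := by
  simp only [UoCauchy, uoTendsto_iff, sub_zero, eventually_atTop_prod_self']

end UnboundedOrderConvergence

section OrderDenseEmbedding

variable {X Y : Type*} [Lattice X] [AddCommGroup X]
  [Lattice Y] [AddCommGroup Y]
  {ι : X →+ Y} (hlatt : ∀ a b : X, ι (a ⊔ b) = ι a ⊔ ι b)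

include hlatt

lemma map_abs_of_map_sup (a : X) : ι |a| = |ι a| := by
  rw [abs, abs, hlatt, map_neg]

lemma map_inf_of_map_sup [AddLeftMono X] [AddLeftMono Y] (a b : X) :
    ι (a ⊓ b) = ι a ⊓ ι b := by
  apply neg_injective
  rw [← map_neg, neg_inf, hlatt, map_neg, map_neg, neg_inf]

lemma map_le_map_iff_of_map_sup (hinj : Function.Injective ι) {a b : X} :
    ι a ≤ ι b ↔ a ≤ b := by
  rw [← sup_eq_right, ← hlatt, hinj.eq_iff, sup_eq_right]

variable [AddLeftMono X] [AddLeftMono Y] {Γ : Type*} [Preorder Γ] [IsDirectedOrder Γ] [Nonempty Γ]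

-- A lower bound of the truncations of `|ι x|` at `y` that is not `≤ 0` dominates some `ι w > 0`;
-- uo-convergence in `X`, tested at `w`, then gives `w ≤ 0`.
lemma uoTendsto_map_zero (hinj : Function.Injective ι)
    (hdense : ∀ z : Y, 0 < z → ∃ x : X, 0 < ι x ∧ ι x ≤ z) (harch : VLArchimedean Y)
    {x : Γ → X} (hx : UoTendsto x 0) : UoTendsto (fun α => ι (x α)) 0 := by
  have hmono {a b : X} (hab : a ≤ b) : ι a ≤ ι b := (map_le_map_iff_of_map_sup hlatt hinj).2 hab
  rw [uoTendsto_iff] at hx ⊢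
  simp only [sub_zero] at hx ⊢
  intro y hy z hz
  by_contra hz₀
  obtain ⟨w, hw, hwz⟩ := hdense z⁺ (posPart_pos_of_not_nonpos hz₀)
  have hw₀ : 0 ≤ w := by
    rw [← map_le_map_iff_of_map_sup hlatt hinj, map_zero]
    exact hw.le
  suffices hle : w ≤ 0 by
    exact hw.not_ge (by simpa only [map_zero] using hmono hle)
  refine hx w hw₀ w fun a ha => ?_
  have ha₀ : 0 ≤ a := by
    obtain ⟨α, hα⟩ := Eventually.exists ha
    exact (le_inf (abs_nonneg _) hw₀).trans hα
  have hιa₀ : 0 ≤ ι a := by simpa only [map_zero] using hmono ha₀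
  have hbound (n : ℕ) : (ι w - ι a)⁺ ≤ (y - n • (ι w - ι a)⁺)⁺ := by
    have hz' : z ≤ ι a + (y - n • (ι w - ι a)⁺)⁺ := by
      refine hz _ (ha.mono fun α hα => inf_le_add_posPart_sub_nsmul hιa₀ hy ?_ n)
      rw [← map_abs_of_map_sup hlatt, ← map_inf_of_map_sup hlatt]
      exact hmono hα
    refine sup_le (sub_le_iff_le_add'.2 (hwz.trans (sup_le hz' ?_))) (posPart_nonneg _)
    exact add_nonneg hιa₀ (posPart_nonneg _)
  have hzero := eq_zero_of_le_posPart_sub_nsmul harch (posPart_nonneg _) le_rfl hbound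
  rwa [posPart_eq_zero, sub_nonpos, map_le_map_iff_of_map_sup hlatt hinj] at hzero

lemma UoCauchy.map (hinj : Function.Injective ι)
    (hdense : ∀ z : Y, 0 < z → ∃ x : X, 0 < ι x ∧ ι x ≤ z) (harch : VLArchimedean Y)
    {x : Γ → X} (hx : UoCauchy x) : UoCauchy fun α => ι (x α) := by
  simpa only [UoCauchy, map_sub] using uoTendsto_map_zero hlatt hinj hdense harch hx

end OrderDenseEmbedding

section Dominable

variable {G : Type*} [Lattice G] [AddCommGroup G]

/-- A set `D` is *dominable* if for every `e > 0` some truncation level `n • e` is not reached: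
the elements `d ⊓ n • e` with `d ∈ D` have a common upper bound `u` with `0 ≤ u < n • e`. -/
def Dominable (D : Set G) : Prop :=
  ∀ e, 0 < e → ∃ n : ℕ, ∃ u ∈ Ico 0 (n • e), ∀ d ∈ D, d ⊓ n • e ≤ u

variable [AddLeftMono G]

lemma posPart_sub_le_posPart_add_sub {a d e y : G} (h : (d - y) ⊓ e ≤ a) :
    (e - a)⁺ ≤ (e + y - d)⁺ := by
  have hdisj : (e - a)⁺ ⊓ (d - y - a)⁺ = 0 := by
    rw [inf_comm]
    exact posPart_sub_inf_posPart_sub_eq_zero h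
  refine (le_posPart_sub_of_inf_eq_zero hdisj le_rfl).trans (sup_le ?_ (posPart_nonneg _))
  rw [sub_le_iff_le_add]
  convert posPart_add_le (e + y - d) (d - y - a) using 2
  abel

lemma dominable_of_sub_inf_le (harch : VLArchimedean G) {D : Set G}
    (h : ∀ e, 0 < e → ∃ y a, 0 ≤ a ∧ ¬ e ≤ a ∧ ∀ d ∈ D, (d - y) ⊓ e ≤ a) : Dominable D := by
  intro e he
  obtain ⟨y, a, ha, hea, hD⟩ := h e he
  have hce : (e - a)⁺ ≤ e := sup_le (sub_le_self e ha) he.le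
  obtain ⟨m, hm⟩ : ∃ m : ℕ, ¬ (e - a)⁺ ≤ (y - m • e)⁺ := by
    by_contra! hall
    have hzero := eq_zero_of_le_posPart_sub_nsmul harch (posPart_nonneg _) hce hall
    exact hea (sub_nonpos.1 (posPart_eq_zero.1 hzero))
  set w := ((e - a)⁺ - (y - m • e)⁺)⁺
  have hw₀ : 0 < w := posPart_pos_of_not_nonpos fun hle => hm (sub_nonpos.1 hle)
  have hwe : w ≤ (m + 1) • e := calc
    w ≤ e := sup_le ((sub_le_self _ (posPart_nonneg _)).trans hce) he.le
    _ ≤ (m + 1) • e := by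
      rw [succ_nsmul]
      exact le_add_of_nonneg_left (nsmul_nonneg he.le m)
  refine ⟨m + 1, (m + 1) • e - w, ⟨sub_nonneg.2 hwe, sub_lt_self _ hw₀⟩, fun d hd => ?_⟩
  rw [inf_comm, inf_eq_sub_posPart_sub]
  refine sub_le_sub_left (sup_le ?_ (posPart_nonneg _)) _
  rw [sub_le_iff_le_add]
  refine (posPart_sub_le_posPart_add_sub (hD d hd)).trans ?_
  convert posPart_add_le ((m + 1) • e - d) (y - m • e) using 2
  rw [succ_nsmul]
  abel

lemma UoCauchy.dominable (harch : VLArchimedean G) {Γ : Type*} [Preorder Γ] [IsDirectedOrder Γ]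
    [Nonempty Γ] {y : Γ → G} (hy : UoCauchy y) : Dominable {d | ∀ᶠ β in atTop, d ≤ y β} := by
  refine dominable_of_sub_inf_le harch fun e he => ?_
  obtain ⟨a, ⟨α₀, hα₀⟩, hea⟩ : ∃ a, (∃ α₀, ∀ α ≥ α₀, ∀ β ≥ α₀, |y α - y β| ⊓ e ≤ a) ∧ ¬ e ≤ a := by
    by_contra! hall
    exact he.not_ge (uoCauchy_iff.1 hy e he.le e hall)
  refine ⟨y α₀, a, ?_, hea, fun d hd => ?_⟩
  · exact (le_inf (abs_nonneg _) he.le).trans (hα₀ α₀ le_rfl α₀ le_rfl)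
  · obtain ⟨β, hdβ, hβ⟩ := (Eventually.and hd (eventually_ge_atTop α₀)).exists
    refine le_trans (inf_le_inf_right e ?_) (hα₀ β hβ α₀ le_rfl)
    exact (sub_le_sub_right hdβ _).trans (le_abs_self _)

end Dominable

lemma exists_maximal_pairwise_subset {α : Type*} {r : α → α → Prop} (hr : ∀ a b, r a b → r b a)
    (P : Set α) : ∃ M ⊆ P, M.Pairwise r ∧ ∀ g ∈ P, (∀ m ∈ M, r g m) → g ∈ M := by
  obtain ⟨M, hM⟩ := zorn_subset {M | M ⊆ P ∧ M.Pairwise r} fun c hc hchain =>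
    ⟨⋃₀ c, ⟨sUnion_subset fun M hM => (hc hM).1,
      (pairwise_sUnion hchain.directedOn).2 fun M hM => (hc hM).2⟩,
      fun _ => subset_sUnion_of_mem⟩
  refine ⟨M, hM.prop.1, hM.prop.2, fun g hg hgM => hM.le_of_ge ⟨insert_subset hg hM.prop.1, ?_⟩
    (subset_insert g M) (mem_insert g M)⟩
  exact hM.prop.2.insert fun m hm _ => ⟨hgM m hm, hr _ _ (hgM m hm)⟩

/-- A lattice-ordered group is *laterally complete* if every nonempty set of pairwise disjoint
positive elements has a supremum. -/
def LaterallyComplete (Y : Type*) [Lattice Y] [Zero Y] : Prop :=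
  ∀ A : Set Y, A.Nonempty → (∀ a ∈ A, 0 ≤ a) → A.Pairwise (fun a b => a ⊓ b = 0) →
    ∃ s, IsLUB A s

section DedekindComplete

variable {Y : Type*} [ConditionallyCompleteLattice Y] [AddCommGroup Y]

/-- The projection of `v ≥ 0` onto the band generated by `w ≥ 0`. -/
noncomputable def bandProj (w v : Y) : Y := ⨆ n : ℕ, v ⊓ n • w

lemma isLUB_bandProj (w v : Y) : IsLUB (range fun n : ℕ => v ⊓ n • w) (bandProj w v) :=
  isLUB_ciSup ⟨v, forall_mem_range.2 fun _ => inf_le_left⟩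

lemma bandProj_le (w v : Y) : bandProj w v ≤ v :=
  (isLUB_bandProj w v).2 (forall_mem_range.2 fun _ => inf_le_left)

lemma le_bandProj_of_le {w v : Y} (hwv : w ≤ v) : w ≤ bandProj w v :=
  (le_inf hwv (one_nsmul w).ge).trans ((isLUB_bandProj w v).1 (mem_range_self 1))

variable [AddLeftMono Y]

variable (Y) in
lemma vlArchimedean_of_conditionallyCompleteLattice : VLArchimedean Y := by
  intro x y hx hxy
  have hlub : IsLUB (range fun n : ℕ => n • x) (⨆ n : ℕ, n • x) :=
    isLUB_ciSup ⟨y, forall_mem_range.2 hxy⟩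
  refine le_antisymm ?_ hx
  rw [← le_sub_self_iff (⨆ n : ℕ, n • x)]
  refine hlub.2 (forall_mem_range.2 fun n => le_sub_iff_add_le.2 ?_)
  rw [← succ_nsmul]
  exact hlub.1 (mem_range_self (n + 1))

variable {v w x : Y}

lemma bandProj_inf_eq_zero (hv : 0 ≤ v) (h : w ⊓ x = 0) : bandProj w v ⊓ x = 0 := by
  have hx : 0 ≤ x := h ▸ inf_le_right
  refine le_antisymm (inf_le_of_isLUB (isLUB_bandProj w v) (forall_mem_range.2 fun n => ?_))
    (le_inf ?_ hx)
  · exact (inf_le_inf_right x inf_le_right).trans (nsmul_inf_eq_zero h n).le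
  · refine le_trans ?_ ((isLUB_bandProj w v).1 (mem_range_self 0))
    exact le_inf hv (zero_nsmul w).ge

lemma bandProj_inf_sub_bandProj (hw : 0 ≤ w) (hv : 0 ≤ v) :
    bandProj w v ⊓ (v - bandProj w v) = 0 := by
  refine bandProj_inf_eq_zero hv ?_
  refine eq_zero_of_le_posPart_sub_nsmul (vlArchimedean_of_conditionallyCompleteLattice Y)
    (le_inf hw (sub_nonneg.2 (bandProj_le w v))) inf_le_left (y := v) fun n => ?_
  calc
    w ⊓ (v - bandProj w v) ≤ v - bandProj w v := inf_le_right
    _ ≤ v - v ⊓ n • w := sub_le_sub_left ((isLUB_bandProj w v).1 (mem_range_self n)) v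
    _ = (v - n • w)⁺ := by rw [inf_eq_sub_posPart_sub, sub_sub_cancel]

/-- A *local bound* of `D` is an element `g ≥ 0` which dominates `D` on the band it generates. -/
def IsLocalBound (D : Set Y) (g : Y) : Prop :=
  0 ≤ g ∧ ∀ d ∈ D, (d - g)⁺ ⊓ g = 0

lemma isLocalBound_bandProj {D : Set Y} {u : Y} (hu : u ∈ Ico 0 v) (hD : ∀ d ∈ D, d ⊓ v ≤ u) :
    IsLocalBound D (bandProj (v - u) v) := by
  have hw : 0 ≤ v - u := sub_nonneg.2 hu.2.le
  have hv : 0 ≤ v := hu.1.trans hu.2.le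
  have hg : 0 ≤ bandProj (v - u) v := hw.trans (le_bandProj_of_le (sub_le_self v hu.1))
  refine ⟨hg, fun d hd => ?_⟩
  have hdisj : bandProj (v - u) v ⊓ (d - u)⁺ = 0 := by
    refine bandProj_inf_eq_zero hv ?_
    rw [inf_comm, ← posPart_of_nonneg hw]
    exact posPart_sub_inf_posPart_sub_eq_zero (hD d hd)
  refine inf_eq_zero_of_le (add_inf_eq_zero ((inf_comm _ _).trans hdisj)
    ((inf_comm _ _).trans (bandProj_inf_sub_bandProj hw hv))) (posPart_nonneg _) ?_
  refine sup_le ?_ (add_nonneg (posPart_nonneg _) (sub_nonneg.2 (bandProj_le _ v)))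
  calc
    d - bandProj (v - u) v = d - v + (v - bandProj (v - u) v) := (sub_add_sub_cancel _ _ _).symm
    _ ≤ (d - u)⁺ + (v - bandProj (v - u) v) :=
      add_le_add_left ((sub_le_sub_left hu.2.le d).trans (le_posPart _)) _

-- If the supremum of a maximal disjoint family of local bounds failed to dominate `d`, the excess
-- `(d - s)⁺` would be disjoint from the family and carry a further local bound.
lemma Dominable.bddAbove {D : Set Y} (hD : Dominable D) (hlat : LaterallyComplete Y) :
    BddAbove D := by
  obtain ⟨M, hMD, hdisj, hmax⟩ := exists_maximal_pairwise_subset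
    (r := fun a b : Y => a ⊓ b = 0) (fun a b h => (inf_comm b a).trans h) {g | IsLocalBound D g}
  have hzero : (0 : Y) ∈ M := hmax 0 ⟨le_rfl, fun d _ => inf_eq_right.2 (posPart_nonneg _)⟩
    fun m hm => inf_eq_left.2 (hMD hm).1
  obtain ⟨s, hs⟩ := hlat M ⟨0, hzero⟩ (fun m hm => (hMD hm).1) hdisj
  refine ⟨s, fun d hd => ?_⟩
  by_contra hds
  obtain ⟨n, u, hu, hDu⟩ := hD (d - s)⁺ (posPart_pos_of_not_nonpos fun h => hds (sub_nonpos.1 h))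
  set g := bandProj (n • (d - s)⁺ - u) (n • (d - s)⁺)
  have hg : 0 < g := (sub_pos.2 hu.2).trans_le (le_bandProj_of_le (sub_le_self _ hu.1))
  have hgM : g ∈ M := by
    refine hmax g (isLocalBound_bandProj hu hDu) fun m hm => ?_
    have hexcess : (d - s)⁺ ⊓ m = 0 := inf_eq_zero_of_le ((hMD hm).2 d hd) (posPart_nonneg _)
      (posPart_mono (sub_le_sub_left (hs.1 hm) d))
    exact inf_eq_zero_of_le (nsmul_inf_eq_zero hexcess n) hg.le (bandProj_le _ _)
  have hgs : (d - s)⁺ ⊓ g = 0 := inf_eq_zero_of_le ((hMD hgM).2 d hd) (posPart_nonneg _)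
    (posPart_mono (sub_le_sub_left (hs.1 hgM) d))
  have hself : g ⊓ g = 0 :=
    inf_eq_zero_of_le (nsmul_inf_eq_zero hgs n) hg.le (bandProj_le _ _)
  exact hg.ne' ((inf_idem g).symm.trans hself)

variable {Γ : Type*} [Preorder Γ] [IsDirectedOrder Γ] [Nonempty Γ] {y : Γ → Y}

lemma abs_sub_liminf_inf_le (hbelow : BddBelow (range y))
    (habove : BddAbove {d | ∀ᶠ β in atTop, d ≤ y β}) {e a : Y} {α₀ : Γ}
    (h : ∀ α ≥ α₀, ∀ β ≥ α₀, |y α - y β| ⊓ e ≤ a) {α : Γ} (hα : α₀ ≤ α) :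
    |y α - liminf y atTop| ⊓ e ≤ a := by
  have hlub : IsLUB {d | ∀ᶠ β in atTop, d ≤ y β} (liminf y atTop) :=
    isLUB_csSup (hbelow.imp fun b hb => .of_forall (forall_mem_range.1 hb)) habove
  have hglb : IsGLB (y '' Ici α₀) (sInf (y '' Ici α₀)) :=
    isGLB_csInf (nonempty_Ici.image y) (hbelow.mono (image_subset_range y _))
  have htail : sInf (y '' Ici α₀) ≤ liminf y atTop := hlub.1 <|
    (eventually_ge_atTop α₀).mono fun β hβ => hglb.1 (mem_image_of_mem y hβ)
  refine sup_inf_le_of_inf_le ?_ ?_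
  · refine (inf_le_inf_right e (sub_le_sub_left htail _)).trans (sub_inf_le_of_isGLB hglb ?_)
    rintro _ ⟨β, hβ, rfl⟩
    exact (inf_le_inf_right e (le_abs_self _)).trans (h α hα β hβ)
  · rw [neg_sub]
    refine sub_inf_le_of_isLUB hlub fun d hd => ?_
    obtain ⟨β, hdβ, hβ⟩ := (Eventually.and hd (eventually_ge_atTop α₀)).exists
    refine le_trans (inf_le_inf_right e ?_) (h β hβ α hα)
    exact (sub_le_sub_right hdβ _).trans (le_abs_self _)

lemma UoCauchy.uoTendsto_liminf (hlat : LaterallyComplete Y) (hy : UoCauchy y)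
    (hbelow : BddBelow (range y)) : UoTendsto y (liminf y atTop) := by
  have habove : BddAbove {d | ∀ᶠ β in atTop, d ≤ y β} :=
    (hy.dominable (vlArchimedean_of_conditionallyCompleteLattice Y)).bddAbove hlat
  rw [uoTendsto_iff]
  refine fun e he z hz => uoCauchy_iff.1 hy e he z fun a ⟨α₀, hα₀⟩ => hz a ?_
  exact (eventually_ge_atTop α₀).mono fun α hα => abs_sub_liminf_inf_le hbelow habove hα₀ hα

lemma UoCauchy.exists_uoTendsto (hlat : LaterallyComplete Y) (hy : UoCauchy y) :
    ∃ l, UoTendsto y l := by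
  have hpos := hy.posPart.uoTendsto_liminf hlat ⟨0, forall_mem_range.2 fun α => posPart_nonneg _⟩
  have hneg := hy.negPart.uoTendsto_liminf hlat ⟨0, forall_mem_range.2 fun α => negPart_nonneg _⟩
  exact ⟨_, by simpa only [posPart_sub_negPart] using hpos.sub hneg⟩

end DedekindComplete

lemma exists_isLUB_of_bddAbove {L : Type*} [Lattice L]
    (h : ∀ S : Set L, S.Nonempty → BddBelow S → BddAbove S → ∃ s, IsLUB S s) {S : Set L}
    (hne : S.Nonempty) (hS : BddAbove S) : ∃ s, IsLUB S s := by
  obtain ⟨t, ht⟩ := hne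
  have hub : upperBounds ((· ⊔ t) '' S) = upperBounds S := by
    ext b
    simp only [mem_upperBounds, forall_mem_image, sup_le_iff]
    exact ⟨fun hb x hx => (hb hx).1, fun hb x hx => ⟨hb x hx, hb t ht⟩⟩
  obtain ⟨s, hs⟩ := h ((· ⊔ t) '' S) ⟨t ⊔ t, mem_image_of_mem _ ht⟩
    ⟨t, forall_mem_image.2 fun _ _ => le_sup_right⟩ (by rwa [BddAbove, hub])
  exact ⟨s, by rwa [IsLUB, ← hub]⟩

lemma exists_conditionallyCompleteLattice {L : Type*} [inst : Lattice L] [Nonempty L]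
    (h : ∀ S : Set L, S.Nonempty → BddBelow S → BddAbove S → ∃ s, IsLUB S s) :
    ∃ C : ConditionallyCompleteLattice L, C.toLattice = inst := by
  let : SupSet L := ⟨fun S => Classical.epsilon (IsLUB S)⟩
  exact ⟨conditionallyCompleteLatticeOfLatticeOfsSup L fun S hS hne =>
    Classical.epsilon_spec (exists_isLUB_of_bddAbove h hne hS), rfl⟩

theorem stmt10_general {X Y : Type*} [Lattice X] [AddCommGroup X] [AddLeftMono X]
    [Lattice Y] [AddCommGroup Y] [AddLeftMono Y] (ι : X →+ Y) (hinj : Function.Injective ι)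
    (hlatt : ∀ a b : X, ι (a ⊔ b) = ι a ⊔ ι b)
    (hdense : ∀ z : Y, 0 < z → ∃ x : X, 0 < ι x ∧ ι x ≤ z)
    (hYdc : ∀ S : Set Y, S.Nonempty → BddBelow S → BddAbove S → ∃ s, IsLUB S s)
    (hYlat : LaterallyComplete Y) :
    (∀ (Γ : Type*) [Preorder Γ] [IsDirectedOrder Γ] [Nonempty Γ] (y : Γ → Y),
        UoCauchy y → ∃ l, UoTendsto y l) ∧
    (∀ (Γ : Type*) [Preorder Γ] [IsDirectedOrder Γ] [Nonempty Γ] (x : Γ → X),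
        UoCauchy x → ∃ l : Y, UoTendsto (fun α => ι (x α)) l) := by
  obtain ⟨C, rfl⟩ := exists_conditionallyCompleteLattice hYdc
  have harch := vlArchimedean_of_conditionallyCompleteLattice Y
  exact ⟨fun Γ _ _ _ y hy => hy.exists_uoTendsto hYlat,
    fun Γ _ _ _ x hx => (hx.map hlatt hinj hdense harch).exists_uoTendsto hYlat⟩

/-- Let `X` be a vector lattice whose order continuous dual separates
the points of `X`. Then the universal completion `Xᵘ` of `X` (here: any universally
complete vector lattice `Y` containing `X` as an order dense sublattice) is uo-complete,
and every uo-Cauchy net in `X` uo-converges in `Xᵘ`. -/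
theorem stmt10 {X Y : Type*}
    [Lattice X] [AddCommGroup X] [CovariantClass X X (· + ·) (· ≤ ·)]
    [Module ℝ X] [PosSMulMono ℝ X]
    [Lattice Y] [AddCommGroup Y] [CovariantClass Y Y (· + ·) (· ≤ ·)]
    [Module ℝ Y] [PosSMulMono ℝ Y]
    (harchX : VLArchimedean X) (harchY : VLArchimedean Y)
    -- `ι` embeds `X` into `Y` as a sublattice:
    (ι : X →ₗ[ℝ] Y) (hinj : Function.Injective ι)
    (hlatt : ∀ a b : X, ι (a ⊔ b) = ι a ⊔ ι b)
    -- `X` is order dense in `Y`: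
    (hdense : ∀ z : Y, 0 < z → ∃ x : X, 0 < ι x ∧ ι x ≤ z)
    -- `Y` is order complete:
    (hYdc : ∀ S : Set Y, S.Nonempty → BddBelow S → BddAbove S → ∃ s, IsLUB S s)
    -- `Y` is laterally complete:
    (hYlat : ∀ A : Set Y, A.Nonempty → (∀ a ∈ A, 0 ≤ a) →
      A.Pairwise (fun a b => a ⊓ b = 0) → ∃ s, IsLUB A s)
    -- the order continuous dual of `X` separates the points of `X`:
    (hsep : ∀ x : X, x ≠ 0 → ∃ f : X →ₗ[ℝ] ℝ, OrdContFunctional f ∧ f x ≠ 0) :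
    -- `Y` is uo-complete:
    (∀ (Γ : Type*) [Preorder Γ] [IsDirected Γ (· ≤ ·)] [Nonempty Γ] (y : Γ → Y),
        UoCauchy y → ∃ l, UoTendsto y l) ∧
    -- every uo-Cauchy net in `X` uo-converges in `Y`:
    (∀ (Γ : Type*) [Preorder Γ] [IsDirected Γ (· ≤ ·)] [Nonempty Γ] (x : Γ → X),
        UoCauchy x → ∃ l : Y, UoTendsto (fun α => ι (x α)) l) := by
  exact stmt10_general ι.toAddMonoidHom hinj hlatt hdense hYdc hYlat
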